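/- If H is a conductor submonoid of a factorial monoid F and H is not half-factorial, then the adjacent catenary degree of H equals 3. -/

import Mathlib

def IsPrimeElem {F : Type*} [CancelCommMonoid F] (p : F) : Prop :=
  ¬ IsUnit p ∧ ∀ a b : F, p ∣ a * b → p ∣ a ∨ p ∣ b

def IsFactorialMonoid (F : Type*) [CancelCommMonoid F] : Prop :=
  ∀ a : F, ∃ (u : F) (l : Multiset F), IsUnit u ∧ (∀ p ∈ l, IsPrimeElem p) ∧ a = u * l.prod

/-- `a` is an invertible element of the submonoid `H`, i.e. `a ∈ H^×`. -/
def IsUnitIn {F : Type*} [CancelCommMonoid F] (H : Submonoid F) (a : F) : Prop :=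
  a ∈ H ∧ ∃ b ∈ H, a * b = 1

/-- `H` is a conductor submonoid of `F`: `H ≠ H^×` and `H \ H^×` is an s-ideal of `F`. -/
def IsConductorSubmonoid {F : Type*} [CancelCommMonoid F] (H : Submonoid F) : Prop :=
  (∃ a ∈ H, ¬ IsUnitIn H a) ∧
  ∀ a ∈ H, ¬ IsUnitIn H a → ∀ y : F, a * y ∈ H ∧ ¬ IsUnitIn H (a * y)

/-- `a` is an atom of the submonoid `H`. -/
def IsAtomIn {F : Type*} [CancelCommMonoid F] (H : Submonoid F) (a : F) : Prop :=
  a ∈ H ∧ ¬ IsUnitIn H a ∧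
    ∀ b c : F, b ∈ H → c ∈ H → a = b * c → IsUnitIn H b ∨ IsUnitIn H c


/-- The set of factorizations of `a` into atoms of `H` (as multisets of atoms). -/
def FactorizationsOf {F : Type*} [CancelCommMonoid F] (H : Submonoid F) (a : F) :
    Set (Multiset F) :=
  {l | (∀ u ∈ l, IsAtomIn H u) ∧ l.prod = a}

/-- The distance between two factorizations: cancel the common part and take the maximum
of the remaining lengths. -/
def factDist {F : Type*} [CancelCommMonoid F] [DecidableEq F]
    (z z' : Multiset F) : ℕ :=
  max (Multiset.card (z - z')) (Multiset.card (z' - z))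

/-- The set of lengths of `a`. -/
def LengthSetOf {F : Type*} [CancelCommMonoid F] (H : Submonoid F) (a : F) : Set ℕ :=
  {n | ∃ l ∈ FactorizationsOf H a, Multiset.card l = n}

/-!
Write `I` for the set of nonunits of `H`, an ideal of `F`, and call a factorization `a = x * y` with
`x, y ∈ I` a split of `a`. If `p` is prime and `x`, `p * y` is a split with `y ∈ I`, then the prime
can be moved to give the split `x * p`, `y`. Multiplying an atom by `p` yields an atom or a product
of two atoms, so this changes a suitable factorization into atoms at distance at most `3`. Aligning
two splits `αβ · γδ` and `αγ · βδ`, one moves the primes of `γ` and `β` one at a time; the process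
is blocked only at a split into two atoms, and any two such splits are at distance at most `2`.
By induction on `a` this gives `c(H) ≤ 3`.

Along a `3`-chain from a shorter to a longer factorization some step crosses the given length, and
`d(z, z') ≥ 2 + ||z| - |z'||` forces this step to increase the length by exactly one.
-/

section EuclidProperty

/-- Euclid's property of a prime, but not excluding units: in a factorial monoid every element is
then a product of elements with this property. -/
def HasEuclidProperty {M : Type*} [CommMonoid M] (p : M) : Prop :=
  ∀ a b : M, p ∣ a * b → p ∣ a ∨ p ∣ b

variable {F : Type*} [CancelCommMonoid F]

theorem IsFactorialMonoid.induction_on (hF : IsFactorialMonoid F) {P : F → Prop} (a : F)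
    (one : P 1) (mul : ∀ p b, HasEuclidProperty p → P b → P (p * b)) : P a := by
  obtain ⟨u, l, hu, hl, rfl⟩ := hF a
  refine mul u _ (fun _ _ _ => Or.inl hu.dvd) ?_
  clear hu
  induction l using Multiset.induction_on with
  | empty => simpa using one
  | cons p l ih =>
    rw [Multiset.forall_mem_cons] at hl
    rw [Multiset.prod_cons]
    exact mul p _ hl.1.2 (ih hl.2)

theorem IsFactorialMonoid.exists_common_refinement (hF : IsFactorialMonoid F) (x : F) :
    ∀ {y v w : F}, x * y = v * w →
      ∃ α β γ δ, x = α * β ∧ y = γ * δ ∧ v = α * γ ∧ w = β * δ := by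
  induction x using hF.induction_on with
  | one =>
    intro y v w h
    exact ⟨1, 1, v, w, by simp, by simpa using h, by simp, by simp⟩
  | mul p x hp ih =>
    intro y v w h
    rw [mul_assoc] at h
    rcases hp v w ⟨x * y, h.symm⟩ with ⟨v, rfl⟩ | ⟨w, rfl⟩
    · rw [mul_assoc] at h
      obtain ⟨α, β, γ, δ, rfl, rfl, rfl, rfl⟩ := ih (mul_left_cancel h)
      exact ⟨p * α, β, γ, δ, by simp only [mul_assoc], rfl, by simp only [mul_assoc], rfl⟩
    · rw [mul_left_comm v] at h
      obtain ⟨α, β, γ, δ, rfl, rfl, rfl, rfl⟩ := ih (mul_left_cancel h)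
      exact ⟨α, p * β, γ, δ, mul_left_comm _ _ _, rfl, rfl, by simp only [mul_assoc]⟩

theorem acc_dvd_and_not_dvd_mul {p b : F} (hp : HasEuclidProperty p)
    (hb : Acc (fun x a : F => x ∣ a ∧ ¬ a ∣ x) b) :
    Acc (fun x a : F => x ∣ a ∧ ¬ a ∣ x) (p * b) := by
  induction hb with
  | intro b hb ih =>
    refine ⟨_, fun x ⟨⟨y, hxy⟩, hnot⟩ => ?_⟩
    rcases hp x y ⟨b, hxy.symm⟩ with ⟨x, rfl⟩ | ⟨y, rfl⟩
    · rw [mul_assoc] at hxy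
      exact ih x ⟨⟨y, mul_left_cancel hxy⟩, fun h => hnot (mul_dvd_mul_left p h)⟩
    · rw [mul_left_comm] at hxy
      have hxb : x ∣ b := ⟨y, mul_left_cancel hxy⟩
      exact ⟨_, fun z ⟨hzx, hxz⟩ => hb z ⟨hzx.trans hxb, fun h => hxz (hxb.trans h)⟩⟩

theorem IsFactorialMonoid.wellFounded_dvd_and_not_dvd (hF : IsFactorialMonoid F) :
    WellFounded fun x a : F => x ∣ a ∧ ¬ a ∣ x := by
  refine ⟨fun a => ?_⟩
  induction a using hF.induction_on with
  | one => exact ⟨_, fun x hx => absurd (one_dvd x) hx.2⟩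
  | mul p b hp hb => exact acc_dvd_and_not_dvd_mul hp hb

end EuclidProperty

section Factorizations

variable {F : Type*} [CancelCommMonoid F] {H : Submonoid F} {a b : F} {z z' w : Multiset F}

/-- `a` belongs to `H \ H^×`. -/
def IsNonunitIn (H : Submonoid F) (a : F) : Prop :=
  a ∈ H ∧ ¬ IsUnitIn H a

theorem IsNonunitIn.mul_mem (ha : IsNonunitIn H a) (hb : b ∈ H) : IsNonunitIn H (a * b) := by
  refine ⟨H.mul_mem ha.1 hb, fun ⟨_, c, hc, habc⟩ => ha.2 ⟨ha.1, b * c, H.mul_mem hb hc, ?_⟩⟩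
  rw [← mul_assoc, habc]

theorem not_isNonunitIn_one : ¬ IsNonunitIn H 1 :=
  fun h => h.2 ⟨H.one_mem, 1, H.one_mem, one_mul 1⟩

theorem isAtomIn_iff :
    IsAtomIn H a ↔ IsNonunitIn H a ∧ ∀ b c, IsNonunitIn H b → IsNonunitIn H c → b * c ≠ a := by
  constructor
  · rintro ⟨haH, ha, hatom⟩
    exact ⟨⟨haH, ha⟩, fun b c hb hc habc => (hatom b c hb.1 hc.1 habc.symm).elim hb.2 hc.2⟩
  · rintro ⟨⟨haH, ha⟩, hatom⟩
    refine ⟨haH, ha, fun b c hb hc habc => ?_⟩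
    by_contra! hbc
    exact hatom b c ⟨hb, hbc.1⟩ ⟨hc, hbc.2⟩ habc.symm

theorem IsAtomIn.isNonunitIn (ha : IsAtomIn H a) : IsNonunitIn H a :=
  ⟨ha.1, ha.2.1⟩

theorem exists_mul_eq_of_not_isAtomIn (ha : IsNonunitIn H a) (hatom : ¬ IsAtomIn H a) :
    ∃ b c, IsNonunitIn H b ∧ IsNonunitIn H c ∧ b * c = a := by
  by_contra! h
  exact hatom (isAtomIn_iff.2 ⟨ha, h⟩)

theorem singleton_mem_factorizationsOf (ha : IsAtomIn H a) : {a} ∈ FactorizationsOf H a :=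
  ⟨by simpa using ha, Multiset.prod_singleton a⟩

theorem add_mem_factorizationsOf (hz : z ∈ FactorizationsOf H a) (hw : w ∈ FactorizationsOf H b) :
    z + w ∈ FactorizationsOf H (a * b) :=
  ⟨fun u hu => (Multiset.mem_add.1 hu).elim (hz.1 u) (hw.1 u), by
    rw [Multiset.prod_add, hz.2, hw.2]⟩

theorem mem_factorizationsOf_prod_of_le (hz : z ∈ FactorizationsOf H a) (hw : w ≤ z) :
    w ∈ FactorizationsOf H w.prod :=
  ⟨fun u hu => hz.1 u (Multiset.mem_of_le hw hu), rfl⟩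

theorem isNonunitIn_of_mem_factorizationsOf (hz : z ∈ FactorizationsOf H a) (hz0 : z ≠ 0) :
    IsNonunitIn H a := by
  obtain ⟨u, hu⟩ := Multiset.exists_mem_of_ne_zero hz0
  obtain ⟨w, rfl⟩ := Multiset.exists_cons_of_mem hu
  rw [← hz.2, Multiset.prod_cons]
  exact (hz.1 u hu).isNonunitIn.mul_mem
    (H.multiset_prod_mem w fun v hv => (hz.1 v (Multiset.mem_cons_of_mem hv)).1)

theorem exists_cons_of_mem_factorizationsOf (hz : z ∈ FactorizationsOf H a)
    (ha : IsNonunitIn H a) :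
    ∃ u w, z = u ::ₘ w ∧ IsAtomIn H u ∧ w ∈ FactorizationsOf H w.prod ∧ u * w.prod = a := by
  have hz0 : z ≠ 0 := by
    rintro rfl
    exact not_isNonunitIn_one (hz.2 ▸ ha)
  obtain ⟨u, hu⟩ := Multiset.exists_mem_of_ne_zero hz0
  obtain ⟨w, rfl⟩ := Multiset.exists_cons_of_mem hu
  exact ⟨u, w, rfl, hz.1 u hu, mem_factorizationsOf_prod_of_le hz (Multiset.le_cons_self w u),
    by rw [← Multiset.prod_cons, hz.2]⟩

theorem eq_singleton_of_mem_factorizationsOf (ha : IsAtomIn H a) (hz : z ∈ FactorizationsOf H a) :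
    z = {a} := by
  obtain ⟨u, w, rfl, hu, hw, rfl⟩ := exists_cons_of_mem_factorizationsOf hz ha.isNonunitIn
  obtain rfl : w = 0 := by
    by_contra hw0
    exact (isAtomIn_iff.1 ha).2 u _ hu.isNonunitIn (isNonunitIn_of_mem_factorizationsOf hw hw0) rfl
  simp

theorem eq_of_mem_factorizationsOf_of_card_le_one (hz : z ∈ FactorizationsOf H a)
    (hz' : z' ∈ FactorizationsOf H a) (hcard : z.card ≤ 1) : z' = z := by
  rcases Nat.le_one_iff_eq_zero_or_eq_one.1 hcard with h0 | h1
  · obtain rfl := Multiset.card_eq_zero.1 h0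
    by_contra hz'0
    exact not_isNonunitIn_one (hz.2 ▸ isNonunitIn_of_mem_factorizationsOf hz' hz'0)
  · obtain ⟨u, rfl⟩ := Multiset.card_eq_one.1 h1
    obtain rfl : u = a := by simpa using hz.2
    exact eq_singleton_of_mem_factorizationsOf (hz.1 u (Multiset.mem_singleton_self u)) hz'

theorem exists_add_of_one_lt_card (hz : z ∈ FactorizationsOf H a) (hcard : 1 < z.card) :
    ∃ x y X Y, IsNonunitIn H x ∧ IsNonunitIn H y ∧ x * y = a ∧
      X ∈ FactorizationsOf H x ∧ Y ∈ FactorizationsOf H y ∧ z = X + Y := by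
  have hz0 : z ≠ 0 := Multiset.card_pos.1 (by lia)
  obtain ⟨u, w, rfl, hu, hw, hprod⟩ :=
    exists_cons_of_mem_factorizationsOf hz (isNonunitIn_of_mem_factorizationsOf hz hz0)
  have hw0 : w ≠ 0 := by
    rintro rfl
    simp at hcard
  exact ⟨u, w.prod, {u}, w, hu.isNonunitIn, isNonunitIn_of_mem_factorizationsOf hw hw0, hprod,
    singleton_mem_factorizationsOf hu, hw, (Multiset.singleton_add u w).symm⟩

theorem two_add_natAbs_card_sub_card_le_factDist [DecidableEq F]
    (hz : z ∈ FactorizationsOf H a) (hz' : z' ∈ FactorizationsOf H a) (hne : z ≠ z') :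
    2 + ((z.card : ℤ) - z'.card).natAbs ≤ factDist z z' := by
  have hsub : z - z' + z ∩ z' = z := Multiset.sub_add_inter z z'
  have hsub' : z' - z + z ∩ z' = z' := Multiset.inter_comm z z' ▸ Multiset.sub_add_inter z' z
  have hprod : (z' - z).prod = (z - z').prod := by
    apply mul_right_cancel (b := (z ∩ z').prod)
    rw [← Multiset.prod_add, ← Multiset.prod_add, hsub, hsub', hz.2, hz'.2]
  have hmem := mem_factorizationsOf_prod_of_le hz (tsub_le_self : z - z' ≤ z)
  have hmem' := hprod ▸ mem_factorizationsOf_prod_of_le hz' (tsub_le_self : z' - z ≤ z')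
  have hdiff : z - z' ≠ z' - z := fun h => hne (by rw [← hsub, h, hsub'])
  have htwo : 1 < (z - z').card := by
    by_contra! h
    exact hdiff (eq_of_mem_factorizationsOf_of_card_le_one hmem hmem' h).symm
  have htwo' : 1 < (z' - z).card := by
    by_contra! h
    exact hdiff (eq_of_mem_factorizationsOf_of_card_le_one hmem' hmem h)
  have hcard := congrArg Multiset.card hsub
  have hcard' := congrArg Multiset.card hsub'
  rw [Multiset.card_add] at hcard hcard'
  unfold factDist
  lia

end Factorizations

section Conductor

variable {F : Type*} [CancelCommMonoid F] {H : Submonoid F} {a p s t u x y : F}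

theorem IsNonunitIn.mul_right (hH : IsConductorSubmonoid H) (hx : IsNonunitIn H x) (y : F) :
    IsNonunitIn H (x * y) :=
  hH.2 x hx.1 hx.2 y

theorem IsNonunitIn.mul_left (hH : IsConductorSubmonoid H) (hx : IsNonunitIn H x) (y : F) :
    IsNonunitIn H (y * x) :=
  mul_comm x y ▸ hx.mul_right hH y

theorem IsNonunitIn.not_dvd_one (hH : IsConductorSubmonoid H) (hx : IsNonunitIn H x) :
    ¬ x ∣ 1 := by
  rintro ⟨y, hy⟩
  exact not_isNonunitIn_one (hy ▸ hx.mul_right hH y)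

theorem IsNonunitIn.not_mul_dvd (hH : IsConductorSubmonoid H) (hy : IsNonunitIn H y) (x : F) :
    ¬ x * y ∣ x := by
  rintro ⟨c, hc⟩
  rw [mul_assoc, left_eq_mul] at hc
  exact hy.not_dvd_one hH ⟨c, hc.symm⟩

theorem IsAtomIn.of_dvd (hH : IsConductorSubmonoid H) (hu : IsAtomIn H u) (hx : IsNonunitIn H x)
    (hxu : x ∣ u) : IsAtomIn H x := by
  obtain ⟨y, rfl⟩ := hxu
  refine isAtomIn_iff.2 ⟨hx, fun b c hb hc hbc => ?_⟩
  exact (isAtomIn_iff.1 hu).2 b (c * y) hb (hc.mul_right hH y) (by rw [← mul_assoc, hbc])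

theorem isAtomIn_mul_of_not_isNonunitIn (hH : IsConductorSubmonoid H) (hp : HasEuclidProperty p)
    (hpy : IsNonunitIn H (p * y)) (hy : ¬ IsNonunitIn H y) : IsAtomIn H (p * y) := by
  refine isAtomIn_iff.2 ⟨hpy, fun b c hb hc hbc => hy ?_⟩
  rcases hp b c ⟨y, hbc⟩ with ⟨b, rfl⟩ | ⟨c, rfl⟩
  · rw [mul_assoc] at hbc
    exact mul_left_cancel hbc ▸ hc.mul_left hH b
  · rw [mul_left_comm] at hbc
    exact mul_left_cancel hbc ▸ hb.mul_right hH c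

theorem IsAtomIn.isAtomIn_and_isAtomIn_of_mul_eq_mul (hH : IsConductorSubmonoid H)
    (hu : IsAtomIn H u) (hp : HasEuclidProperty p) (hs : IsNonunitIn H s) (ht : IsNonunitIn H t)
    (hst : s * t = p * u) (hps : p ∣ s) : IsAtomIn H s ∧ IsAtomIn H t := by
  obtain ⟨s, rfl⟩ := hps
  rw [mul_assoc] at hst
  obtain rfl := mul_left_cancel hst
  have hs' : ¬ IsNonunitIn H s := fun h => (isAtomIn_iff.1 hu).2 s t h ht rfl
  exact ⟨isAtomIn_mul_of_not_isNonunitIn hH hp hs hs', hu.of_dvd hH ht (dvd_mul_left t s)⟩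

theorem IsAtomIn.exists_mem_factorizationsOf_mul_card_le_two (hH : IsConductorSubmonoid H)
    (hu : IsAtomIn H u) (hp : HasEuclidProperty p) :
    ∃ z ∈ FactorizationsOf H (p * u), z.card ≤ 2 := by
  by_cases hatom : IsAtomIn H (p * u)
  · exact ⟨_, singleton_mem_factorizationsOf hatom, by simp⟩
  obtain ⟨s, t, hs, ht, hst⟩ :=
    exists_mul_eq_of_not_isAtomIn (hu.isNonunitIn.mul_left hH p) hatom
  have hatoms : IsAtomIn H s ∧ IsAtomIn H t := by
    rcases hp s t ⟨u, hst⟩ with hps | hpt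
    · exact hu.isAtomIn_and_isAtomIn_of_mul_eq_mul hH hp hs ht hst hps
    · rw [mul_comm] at hst
      exact (hu.isAtomIn_and_isAtomIn_of_mul_eq_mul hH hp ht hs hst hpt).symm
  exact ⟨{s} + {t}, hst ▸ add_mem_factorizationsOf (singleton_mem_factorizationsOf hatoms.1)
    (singleton_mem_factorizationsOf hatoms.2), by simp⟩

theorem IsConductorSubmonoid.factorizationsOf_nonempty (hH : IsConductorSubmonoid H)
    (hF : IsFactorialMonoid F) (ha : IsNonunitIn H a) : (FactorizationsOf H a).Nonempty := by
  induction a using hF.wellFounded_dvd_and_not_dvd.induction with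
  | _ a ih =>
    by_cases hatom : IsAtomIn H a
    · exact ⟨_, singleton_mem_factorizationsOf hatom⟩
    obtain ⟨b, c, hb, hc, rfl⟩ := exists_mul_eq_of_not_isAtomIn ha hatom
    obtain ⟨z, hz⟩ := ih b ⟨dvd_mul_right b c, hc.not_mul_dvd hH b⟩ hb
    obtain ⟨w, hw⟩ := ih c ⟨dvd_mul_left c b, mul_comm c b ▸ hb.not_mul_dvd hH c⟩ hc
    exact ⟨z + w, add_mem_factorizationsOf hz hw⟩

end Conductor

section Chains

variable {F : Type*} [CancelCommMonoid F] [DecidableEq F] {H : Submonoid F} {N : ℕ}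
  {a b x y x' y' x'' y'' : F} {z z' w X X' Y Y' : Multiset F}

/-- Being joined by an `N`-chain of factorizations. Consecutive members are
factorizations of the same element, so this element is constant along the chain. -/
def IsChained (H : Submonoid F) (N : ℕ) : Multiset F → Multiset F → Prop :=
  Relation.ReflTransGen fun z w =>
    ∃ a, z ∈ FactorizationsOf H a ∧ w ∈ FactorizationsOf H a ∧ factDist z w ≤ N

/-- The catenary degree of the element `a` is at most `N`. -/
def CatenaryDegreeLE (H : Submonoid F) (N : ℕ) (a : F) : Prop :=
  ∀ z ∈ FactorizationsOf H a, ∀ w ∈ FactorizationsOf H a, IsChained H N z w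

/-- Whenever `a` is a product of two nonunits of `H`, both have catenary degree at most `N`. This is
the inductive hypothesis in the proof of `CatenaryDegreeLE H N a`. -/
def FactorsCatenaryDegreeLE (H : Submonoid F) (N : ℕ) (a : F) : Prop :=
  ∀ x y, IsNonunitIn H x → IsNonunitIn H y → x * y = a →
    CatenaryDegreeLE H N x ∧ CatenaryDegreeLE H N y

/-- Every factorization of `x * y` refining the product `x * y` is joined by an `N`-chain to every
factorization of `x' * y'` refining the product `x' * y'`. -/
def SplitsChained (H : Submonoid F) (N : ℕ) (x y x' y' : F) : Prop :=
  ∀ X ∈ FactorizationsOf H x, ∀ Y ∈ FactorizationsOf H y,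
    ∀ X' ∈ FactorizationsOf H x', ∀ Y' ∈ FactorizationsOf H y', IsChained H N (X + Y) (X' + Y')

theorem IsChained.symm (h : IsChained H N z z') : IsChained H N z' z := by
  refine Relation.ReflTransGen.mono ?_ _ _ (Relation.ReflTransGen.swap _ _ h)
  rintro w w' ⟨a, hw', hw, hdist⟩
  exact ⟨a, hw, hw', by rwa [factDist, max_comm]⟩

theorem IsChained.add_right (h : IsChained H N z z') (hw : w ∈ FactorizationsOf H b) :
    IsChained H N (z + w) (z' + w) := by
  refine Relation.ReflTransGen.lift (· + w) ?_ _ _ h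
  rintro z z' ⟨a, hz, hz', hdist⟩
  exact ⟨a * b, add_mem_factorizationsOf hz hw, add_mem_factorizationsOf hz' hw, by
    simpa only [factDist, add_tsub_add_eq_tsub_right] using hdist⟩

theorem isChained_of_card_le (hz : z ∈ FactorizationsOf H a) (hz' : z' ∈ FactorizationsOf H a)
    (hcard : z.card ≤ N) (hcard' : z'.card ≤ N) : IsChained H N z z' :=
  Relation.ReflTransGen.single ⟨a, hz, hz', max_le
    ((Multiset.card_le_card tsub_le_self).trans hcard)
    ((Multiset.card_le_card tsub_le_self).trans hcard')⟩

theorem CatenaryDegreeLE.isChained_add (hx : CatenaryDegreeLE H N x)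
    (hy : CatenaryDegreeLE H N y) (hX : X ∈ FactorizationsOf H x) (hX' : X' ∈ FactorizationsOf H x)
    (hY : Y ∈ FactorizationsOf H y) (hY' : Y' ∈ FactorizationsOf H y) :
    IsChained H N (X + Y) (X' + Y') := by
  refine ((hx X hX X' hX').add_right hY).trans ?_
  rw [add_comm X', add_comm X']
  exact (hy Y hY Y' hY').add_right hX'

theorem SplitsChained.symm (h : SplitsChained H N x y x' y') : SplitsChained H N x' y' x y :=
  fun X' hX' Y' hY' X hX Y hY => (h X hX Y hY X' hX' Y' hY').symm

theorem SplitsChained.trans (h : SplitsChained H N x y x' y')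
    (h' : SplitsChained H N x' y' x'' y'') (hx' : (FactorizationsOf H x').Nonempty)
    (hy' : (FactorizationsOf H y').Nonempty) : SplitsChained H N x y x'' y'' := by
  obtain ⟨X', hX'⟩ := hx'
  obtain ⟨Y', hY'⟩ := hy'
  exact fun X hX Y hY X'' hX'' Y'' hY'' =>
    (h X hX Y hY X' hX' Y' hY').trans (h' X' hX' Y' hY' X'' hX'' Y'' hY'')

theorem splitsChained_of_isAtomIn (hN : 2 ≤ N) (hx : IsAtomIn H x) (hy : IsAtomIn H y)
    (hx' : IsAtomIn H x') (hy' : IsAtomIn H y') (h : x * y = x' * y') :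
    SplitsChained H N x y x' y' := by
  intro X hX Y hY X' hX' Y' hY'
  refine isChained_of_card_le (add_mem_factorizationsOf hX hY)
    (h ▸ add_mem_factorizationsOf hX' hY') ?_ ?_
  · simpa [eq_singleton_of_mem_factorizationsOf hx hX, eq_singleton_of_mem_factorizationsOf hy hY]
  · simpa [eq_singleton_of_mem_factorizationsOf hx' hX',
      eq_singleton_of_mem_factorizationsOf hy' hY']

end Chains

section CatenaryDegree

variable {F : Type*} [CancelCommMonoid F] [DecidableEq F] {H : Submonoid F} {a p v w x y : F}

theorem IsConductorSubmonoid.splitsChained_mul_of_hasEuclidProperty (hH : IsConductorSubmonoid H)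
    (ih : FactorsCatenaryDegreeLE H 3 a) (hp : HasEuclidProperty p) (hx : IsNonunitIn H x)
    (hy : IsNonunitIn H y) (hxy : x * (p * y) = a) : SplitsChained H 3 x (p * y) (p * x) y := by
  intro X hX Y hY X' hX' Y' hY'
  obtain ⟨cx, cpy⟩ := ih x (p * y) hx (hy.mul_left hH p) hxy
  obtain ⟨cpx, cy⟩ := ih (p * x) y (hx.mul_left hH p) hy (by rw [← hxy]; ac_rfl)
  obtain ⟨u, X, rfl, hu, hX₀, rfl⟩ := exists_cons_of_mem_factorizationsOf hX hx
  obtain ⟨v, Y', rfl, hv, hY₀, rfl⟩ := exists_cons_of_mem_factorizationsOf hY' hy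
  obtain ⟨A, hA, hAcard⟩ := hu.exists_mem_factorizationsOf_mul_card_le_two hH hp
  obtain ⟨B, hB, hBcard⟩ := hv.exists_mem_factorizationsOf_mul_card_le_two hH hp
  have hAX : A + X ∈ FactorizationsOf H (p * (u * X.prod)) :=
    mul_assoc p u _ ▸ add_mem_factorizationsOf hA hX₀
  have hBY : B + Y' ∈ FactorizationsOf H (p * (v * Y'.prod)) :=
    mul_assoc p v _ ▸ add_mem_factorizationsOf hB hY₀
  have huB : {u} + B ∈ FactorizationsOf H (u * (p * v)) :=
    add_mem_factorizationsOf (singleton_mem_factorizationsOf hu) hB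
  have hAv : A + {v} ∈ FactorizationsOf H (u * (p * v)) := by
    rw [← mul_assoc, mul_comm u p]
    exact add_mem_factorizationsOf hA (singleton_mem_factorizationsOf hv)
  have hexchange : IsChained H 3 ({u} + B + (X + Y')) (A + {v} + (X + Y')) :=
    (isChained_of_card_le huB hAv (by simp; lia) (by simp; lia)).add_right
      (add_mem_factorizationsOf hX₀ hY₀)
  rw [add_add_add_comm, add_add_add_comm A, Multiset.singleton_add, Multiset.singleton_add]
    at hexchange
  exact ((cx.isChained_add cpy hX hX hY hBY).trans hexchange).trans
    (cpx.isChained_add cy hAX hX' hY' hY')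

theorem IsConductorSubmonoid.splitsChained_mul (hH : IsConductorSubmonoid H)
    (hF : IsFactorialMonoid F) (ih : FactorsCatenaryDegreeLE H 3 a) (c : F)
    (hx : IsNonunitIn H x) (hy : IsNonunitIn H y) (hxy : x * (c * y) = a) :
    SplitsChained H 3 x (c * y) (c * x) y := by
  induction c using hF.induction_on generalizing x with
  | one =>
    exact hH.splitsChained_mul_of_hasEuclidProperty ih (fun _ _ _ => Or.inl (one_dvd _)) hx hy hxy
  | mul p c hp ihc =>
    rw [mul_assoc] at hxy
    have hcy := hy.mul_left hH c
    have hpx := hx.mul_left hH p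
    have hmove : SplitsChained H 3 x (p * (c * y)) (p * x) (c * y) :=
      hH.splitsChained_mul_of_hasEuclidProperty ih hp hx hcy hxy
    have hrest : SplitsChained H 3 (p * x) (c * y) (c * (p * x)) y :=
      ihc hpx (by rw [← hxy]; ac_rfl)
    rw [mul_assoc p c y, mul_assoc p c x, mul_left_comm p c x]
    exact hmove.trans hrest (hH.factorizationsOf_nonempty hF hpx)
      (hH.factorizationsOf_nonempty hF hcy)

theorem IsConductorSubmonoid.splitsChained_of_common_refinement (hH : IsConductorSubmonoid H)
    (hF : IsFactorialMonoid F) (ih : FactorsCatenaryDegreeLE H 3 a) (hv : IsNonunitIn H v)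
    (hw : IsNonunitIn H w) (hvw : v * w = a)
    (hatoms : ∀ s t, IsAtomIn H s → IsAtomIn H t → s * t = a → IsAtomIn H v ∧ IsAtomIn H w)
    (β γ : F) : ∀ α δ x y, IsNonunitIn H x → IsNonunitIn H y →
      x = β * α → y = γ * δ → v = γ * α → w = β * δ → SplitsChained H 3 x y v w := by
  induction β using hF.induction_on generalizing γ with
  | one =>
    rintro α δ x y hx hy rfl rfl rfl rfl
    rw [one_mul] at hx hw hvw ⊢
    rw [one_mul]
    exact hH.splitsChained_mul hF ih γ hx hw (by rw [← hvw]; ac_rfl)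
  | mul q β hq ihβ =>
    induction γ using hF.induction_on with
    | one =>
      rintro α δ x y hx hy rfl rfl rfl rfl
      rw [one_mul] at hy hv hvw ⊢
      rw [one_mul]
      exact (hH.splitsChained_mul hF ih (q * β) hv hy hvw).symm
    | mul p γ hp ihγ =>
      rintro α δ x y hx hy rfl rfl hv' hw'
      have hxy : q * β * α * (p * γ * δ) = a := by rw [← hvw, hv', hw']; ac_rfl
      rw [mul_assoc p] at hy hxy ⊢
      rw [mul_assoc q] at hx hxy ⊢
      by_cases hγδ : IsNonunitIn H (γ * δ)
      · have hpx := hx.mul_left hH p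
        exact (hH.splitsChained_mul_of_hasEuclidProperty ih hp hx hγδ hxy).trans
          (ihγ (p * α) δ _ _ hpx hγδ (by ac_rfl) rfl (by rw [hv']; ac_rfl) hw')
          (hH.factorizationsOf_nonempty hF hpx) (hH.factorizationsOf_nonempty hF hγδ)
      by_cases hβα : IsNonunitIn H (β * α)
      · have hqy := hy.mul_left hH q
        exact (hH.splitsChained_mul_of_hasEuclidProperty ih hq hβα hy
          (by rw [← hxy]; ac_rfl)).symm.trans
          (ihβ (p * γ) α (q * δ) _ _ hβα hqy rfl (by ac_rfl) hv' (by rw [hw']; ac_rfl))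
          (hH.factorizationsOf_nonempty hF hβα) (hH.factorizationsOf_nonempty hF hqy)
      have hx' := isAtomIn_mul_of_not_isNonunitIn hH hq hx hβα
      have hy' := isAtomIn_mul_of_not_isNonunitIn hH hp hy hγδ
      obtain ⟨hv', hw'⟩ := hatoms _ _ hx' hy' hxy
      exact splitsChained_of_isAtomIn (by simp) hx' hy' hv' hw' (hxy.trans hvw.symm)

theorem IsConductorSubmonoid.splitsChained_of_mul_eq (hH : IsConductorSubmonoid H)
    (hF : IsFactorialMonoid F) (ih : FactorsCatenaryDegreeLE H 3 a) (hx : IsNonunitIn H x)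
    (hy : IsNonunitIn H y) (hxy : x * y = a) (hv : IsNonunitIn H v) (hw : IsNonunitIn H w)
    (hvw : v * w = a)
    (hatoms : ∀ s t, IsAtomIn H s → IsAtomIn H t → s * t = a → IsAtomIn H v ∧ IsAtomIn H w) :
    SplitsChained H 3 x y v w := by
  obtain ⟨α, β, γ, δ, rfl, rfl, rfl, rfl⟩ := hF.exists_common_refinement x (hxy.trans hvw.symm)
  exact hH.splitsChained_of_common_refinement hF ih hv hw hvw hatoms β γ α δ _ _ hx hy
    (mul_comm α β) rfl (mul_comm α γ) rfl

theorem IsConductorSubmonoid.catenaryDegreeLE_of_factors (hH : IsConductorSubmonoid H)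
    (hF : IsFactorialMonoid F) (ih : FactorsCatenaryDegreeLE H 3 a) : CatenaryDegreeLE H 3 a := by
  intro z hz z' hz'
  rcases le_or_gt z.card 1 with hcard | hcard
  · rw [eq_of_mem_factorizationsOf_of_card_le_one hz hz' hcard]
    exact Relation.ReflTransGen.refl
  rcases le_or_gt z'.card 1 with hcard' | hcard'
  · rw [eq_of_mem_factorizationsOf_of_card_le_one hz' hz hcard']
    exact Relation.ReflTransGen.refl
  obtain ⟨x, y, X, Y, hx, hy, hxy, hX, hY, rfl⟩ := exists_add_of_one_lt_card hz hcard
  obtain ⟨v, w, V, W, hv, hw, hvw, hV, hW, rfl⟩ := exists_add_of_one_lt_card hz' hcard'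
  -- Moving primes is blocked only at splits into two atoms; if there is such a split, it serves as
  -- a common target.
  by_cases hatoms : ∃ s t, IsAtomIn H s ∧ IsAtomIn H t ∧ s * t = a
  · obtain ⟨s, t, hs, ht, hst⟩ := hatoms
    have hto {x y X Y} (hx : IsNonunitIn H x) (hy : IsNonunitIn H y) (hxy : x * y = a)
        (hX : X ∈ FactorizationsOf H x) (hY : Y ∈ FactorizationsOf H y) :
        IsChained H 3 (X + Y) ({s} + {t}) :=
      hH.splitsChained_of_mul_eq hF ih hx hy hxy hs.isNonunitIn ht.isNonunitIn hst
        (fun _ _ _ _ _ => ⟨hs, ht⟩) X hX Y hY _ (singleton_mem_factorizationsOf hs) _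
        (singleton_mem_factorizationsOf ht)
    exact (hto hx hy hxy hX hY).trans (hto hv hw hvw hV hW).symm
  · exact hH.splitsChained_of_mul_eq hF ih hx hy hxy hv hw hvw
      (fun s t hs ht hst => absurd ⟨s, t, hs, ht, hst⟩ hatoms) X hX Y hY V hV W hW

theorem IsConductorSubmonoid.catenaryDegreeLE_three (hH : IsConductorSubmonoid H)
    (hF : IsFactorialMonoid F) (a : F) : CatenaryDegreeLE H 3 a := by
  induction a using hF.wellFounded_dvd_and_not_dvd.induction with
  | _ a ih =>
    refine hH.catenaryDegreeLE_of_factors hF ?_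
    rintro x y hx hy rfl
    exact ⟨ih x ⟨dvd_mul_right x y, hy.not_mul_dvd hH x⟩,
      ih y ⟨dvd_mul_left y x, mul_comm y x ▸ hx.not_mul_dvd hH y⟩⟩

end CatenaryDegree

section AdjacentLengths

theorem exists_lt_and_not_exists_between {α : Type*} [LinearOrder α] [WellFoundedLT α]
    {S : Set α} {m n : α} (hm : m ∈ S) (hn : n ∈ S) (hmn : m ≠ n) :
    ∃ k ∈ S, ∃ l ∈ S, k < l ∧ ¬ ∃ j ∈ S, k < j ∧ j < l := by
  wlog hlt : m < n generalizing m n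
  · exact this hn hm hmn.symm (hmn.lt_or_gt.resolve_left hlt)
  obtain ⟨⟨l, hl⟩, hcov, -⟩ := exists_covBy_le_of_lt (show (⟨m, hm⟩ : S) < ⟨n, hn⟩ from hlt)
  exact ⟨m, hm, l, hl, hcov.lt, fun ⟨j, hj, hmj, hjl⟩ => hcov.2 (c := ⟨j, hj⟩) hmj hjl⟩

theorem exists_step_of_reflTransGen {α : Type*} {r : α → α → Prop} {P : α → Prop} {x y : α}
    (h : Relation.ReflTransGen r x y) (hx : P x) (hy : ¬ P y) : ∃ c d, r c d ∧ P c ∧ ¬ P d := by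
  induction h with
  | refl => exact absurd hx hy
  | @tail c d _ hcd ih =>
    by_cases hc : P c
    · exact ⟨c, d, hcd, hc, hy⟩
    · exact ih hc

theorem CatenaryDegreeLE.exists_card_eq_succ {F : Type*} [CancelCommMonoid F] [DecidableEq F]
    {H : Submonoid F} {a : F} {z z' : Multiset F} (h : CatenaryDegreeLE H 3 a)
    (hz : z ∈ FactorizationsOf H a) (hz' : z' ∈ FactorizationsOf H a) (hlt : z.card < z'.card) :
    ∃ w ∈ FactorizationsOf H a, ∃ w' ∈ FactorizationsOf H a,
      w.card = z.card ∧ w'.card = z.card + 1 ∧ factDist w w' ≤ 3 := by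
  obtain ⟨w, w', ⟨b, hw, hw', hdist⟩, ⟨hwa, hcard⟩, hnot⟩ := exists_step_of_reflTransGen
    (P := fun w => w ∈ FactorizationsOf H a ∧ w.card ≤ z.card) (h z hz z' hz') ⟨hz, le_rfl⟩
    (fun h => hlt.not_ge h.2)
  obtain rfl : b = a := hw.2.symm.trans hwa.2
  have hcard' : z.card < w'.card := not_le.1 fun h => hnot ⟨hw', h⟩
  have hlower := two_add_natAbs_card_sub_card_le_factDist hw hw' (by rintro rfl; lia)
  exact ⟨w, hw, w', hw', by lia, by lia, hdist⟩

end AdjacentLengths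

/-- if `H` is a conductor submonoid of a factorial monoid `F` and `H` is not
half-factorial, then the adjacent catenary degree of `H` equals `3`: there exists an
adjacent pair of lengths, and for every `a ∈ H` and every adjacent pair `k < ℓ` of lengths
of `a`, the distance `d(Z_k(a), Z_ℓ(a))` equals `3`. -/
theorem stmt_15 {F : Type*} [CancelCommMonoid F] [DecidableEq F]
    (hF : IsFactorialMonoid F) (H : Submonoid F) (hH : IsConductorSubmonoid H)
    (hhf : ∃ a : F, ∃ m ∈ LengthSetOf H a, ∃ n ∈ LengthSetOf H a, m ≠ n) :
    (∃ a : F, ∃ k ∈ LengthSetOf H a, ∃ l ∈ LengthSetOf H a,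
      k < l ∧ ¬ ∃ j ∈ LengthSetOf H a, k < j ∧ j < l) ∧
    (∀ a : F, ∀ k ∈ LengthSetOf H a, ∀ l ∈ LengthSetOf H a,
      k < l → (¬ ∃ j ∈ LengthSetOf H a, k < j ∧ j < l) →
      (∃ z ∈ FactorizationsOf H a, ∃ z' ∈ FactorizationsOf H a,
        Multiset.card z = k ∧ Multiset.card z' = l ∧ factDist z z' ≤ 3) ∧
      (∀ z ∈ FactorizationsOf H a, ∀ z' ∈ FactorizationsOf H a,
        Multiset.card z = k → Multiset.card z' = l → 3 ≤ factDist z z')) := by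
  refine ⟨?_, fun a k hk l hl hkl hadj => ⟨?_, ?_⟩⟩
  · obtain ⟨a, m, hm, n, hn, hmn⟩ := hhf
    exact ⟨a, exists_lt_and_not_exists_between hm hn hmn⟩
  · obtain ⟨z, hz, rfl⟩ := hk
    obtain ⟨z', hz', rfl⟩ := hl
    obtain ⟨w, hw, w', hw', hcard, hcard', hdist⟩ :=
      (hH.catenaryDegreeLE_three hF a).exists_card_eq_succ hz hz' hkl
    have hsucc : w'.card = z'.card := by
      by_contra hne
      exact hadj ⟨w'.card, ⟨w', hw', rfl⟩, by lia, by lia⟩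
    exact ⟨w, hw, w', hw', hcard, hsucc, hdist⟩
  · rintro z hz z' hz' rfl rfl
    have hlower := two_add_natAbs_card_sub_card_le_factDist hz hz' (by rintro rfl; lia)
    lia
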